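/- If U satisfies the Poincaré inequality with constant Λ, then the weighted measure π_h (the Gibbs measure e^{−βV} restricted and normalized on U_h) satisfies the Poincaré inequality ‖f − π_h[f]‖_{L²(π_h)} ≤ h Λ exp((β/2)(sup_{U_h} V − inf_{U_h} V)) ‖∇f‖_{L²(π_h)} for every weakly differentiable f : U_h → ℝ with ∇f ∈ L²(π_h). -/

import Mathlib

/-!
A Poincaré inequality with constant `C` for a probability measure `μ` passes to any probability
measure `ν` with `μ ≤ A ν` and `ν ≤ B μ` at the cost of a factor `√(A B)`: since the mean minimizes
the mean square deviation, `Var_ν f ≤ ∫ (f - μ[f])² dν ≤ B Var_μ f`, and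
`∫ |∇f|² dμ ≤ A ∫ |∇f|² dν` (Holley–Stroock). A density proportional to `e^W` with `a ≤ W ≤ b`
satisfies both bounds with `A B = e^{b - a}`, because the normalizing constants cancel. Before this
perturbation, the homothety of ratio `h` carries the uniform measure on `U` to that on `U_h`, and by
the chain rule it multiplies the constant by `|h|`.
-/

open MeasureTheory

/-- The mean of `f` over a set `U` with respect to Lebesgue measure:
`|U|⁻¹ ∫_U f dx`. -/
noncomputable def meanOn {d : ℕ} (U : Set (EuclideanSpace ℝ (Fin d)))
    (f : EuclideanSpace ℝ (Fin d) → ℝ) : ℝ :=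
  ((volume U).toReal)⁻¹ * ∫ x in U, f x

/-- `U` satisfies the Poincaré inequality with constant `Λ`: for every differentiable
`f : U → ℝ` with `∇f ∈ L²(U)`, `‖f − |U|⁻¹∫_U f‖_{L²(U)} ≤ Λ ‖∇f‖_{L²(U)}`. -/
def SatisfiesPoincare {d : ℕ} (U : Set (EuclideanSpace ℝ (Fin d))) (Λ : ℝ) : Prop :=
  ∀ f : EuclideanSpace ℝ (Fin d) → ℝ, DifferentiableOn ℝ f U →
    IntegrableOn (fun x => ‖fderiv ℝ f x‖ ^ 2) U volume →
    Real.sqrt (∫ x in U, (f x - meanOn U f) ^ 2) ≤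
      Λ * Real.sqrt (∫ x in U, ‖fderiv ℝ f x‖ ^ 2)

/-- The normalizing constant `Z_h = ∫_{U_h} e^{−βV}` of the Gibbs measure on `U_h`. -/
noncomputable def gibbsZ {d : ℕ} (Uh : Set (EuclideanSpace ℝ (Fin d)))
    (V : EuclideanSpace ℝ (Fin d) → ℝ) (β : ℝ) : ℝ :=
  ∫ x in Uh, Real.exp (-β * V x)

/-- The mean `π_h[f]` of `f` under the Gibbs measure `π_h ∝ 1_{U_h} e^{−βV} dx`. -/
noncomputable def gibbsMean {d : ℕ} (Uh : Set (EuclideanSpace ℝ (Fin d)))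
    (V : EuclideanSpace ℝ (Fin d) → ℝ) (β : ℝ)
    (f : EuclideanSpace ℝ (Fin d) → ℝ) : ℝ :=
  (gibbsZ Uh V β)⁻¹ * ∫ x in Uh, f x * Real.exp (-β * V x)

open ProbabilityTheory
open scoped NNReal ENNReal

section Measure

variable {α : Type*} {mα : MeasurableSpace α} {μ ν : Measure α}

theorem variance_le_integral_sub_sq [IsProbabilityMeasure μ] {f : α → ℝ}
    (hf : AEStronglyMeasurable f μ) (c : ℝ) : Var[f; μ] ≤ ∫ x, (f x - c) ^ 2 ∂μ := by
  rw [← variance_sub_const hf c]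
  exact variance_le_expectation_sq (hf.sub aestronglyMeasurable_const)

theorem integral_le_mul_integral_of_le_smul {c : ℝ≥0} (hνμ : ν ≤ c • μ) {f : α → ℝ}
    (hf : 0 ≤ f) (hfi : Integrable f μ) : ∫ x, f x ∂ν ≤ c * ∫ x, f x ∂μ := by
  rw [← smul_eq_mul, ← NNReal.smul_def, ← integral_smul_nnreal_measure]
  exact integral_mono_measure hνμ (ae_of_all _ hf) hfi.smul_measure_nnreal

theorem tilted_smul_measure {c : ℝ≥0∞} (hc₀ : c ≠ 0) (hc : c ≠ ∞) (W : α → ℝ) :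
    (c • μ).tilted W = μ.tilted W := by
  have hc_pos : 0 < c.toReal := ENNReal.toReal_pos hc₀ hc
  rw [Measure.tilted, Measure.tilted, withDensity_smul_measure, ← withDensity_smul' c _ hc]
  congr 1
  ext x
  rw [Pi.smul_apply, smul_eq_mul, integral_smul_measure, smul_eq_mul, div_mul_eq_div_div_swap,
    ENNReal.ofReal_div_of_pos hc_pos, ENNReal.ofReal_toReal hc, ENNReal.mul_div_cancel hc₀ hc]

theorem integral_tilted_eq_inv_mul (W g : α → ℝ) :
    ∫ x, g x ∂μ.tilted W = (∫ x, Real.exp (W x) ∂μ)⁻¹ * ∫ x, g x * Real.exp (W x) ∂μ := by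
  rw [integral_tilted, ← integral_const_mul]
  congr with x
  rw [smul_eq_mul, div_eq_inv_mul]
  ring

theorem tilted_le_smul {W : α → ℝ} {b : ℝ} (hb : ∀ᵐ x ∂μ, W x ≤ b) :
    μ.tilted W ≤ (Real.exp b / ∫ x, Real.exp (W x) ∂μ).toNNReal • μ := by
  change _ ≤ ENNReal.ofReal (Real.exp b / ∫ x, Real.exp (W x) ∂μ) • μ
  rw [← withDensity_const]
  refine withDensity_mono ?_
  filter_upwards [hb] with x hx
  gcongr

theorem le_smul_tilted {W : α → ℝ} (hW : Integrable (fun x => Real.exp (W x)) μ) {a : ℝ}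
    (ha : ∀ᵐ x ∂μ, a ≤ W x) :
    μ ≤ (Real.exp (-a) * ∫ x, Real.exp (W x) ∂μ).toNNReal • μ.tilted W := by
  rcases eq_zero_or_neZero μ with rfl | _
  · exact Measure.zero_le _
  set Z := ∫ x, Real.exp (W x) ∂μ
  have hZ : 0 < Z := integral_exp_pos hW
  change _ ≤ ENNReal.ofReal (Real.exp (-a) * Z) • μ.withDensity _
  rw [← withDensity_smul' _ _ ENNReal.ofReal_ne_top]
  nth_rw 1 [← withDensity_one (μ := μ)]
  refine withDensity_mono ?_
  filter_upwards [ha] with x hx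
  rw [Pi.one_apply, Pi.smul_apply, smul_eq_mul, ← ENNReal.ofReal_mul (by positivity),
    ENNReal.one_le_ofReal]
  calc 1 ≤ Real.exp (W x - a) := Real.one_le_exp (sub_nonneg.2 hx)
    _ = Real.exp (-a) * Z * (Real.exp (W x) / Z) := by
      rw [sub_eq_neg_add, Real.exp_add]
      field_simp

end Measure

section FDeriv

variable {E F G : Type*} [NormedAddCommGroup E] [NormedSpace ℝ E] [NormedAddCommGroup F]
  [NormedSpace ℝ F] [NormedAddCommGroup G] [NormedSpace ℝ G]

theorem norm_fderiv_comp_sq_le {f : F → G} {φ : E → F} {x : E} {L : ℝ}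
    (hf : DifferentiableAt ℝ f (φ x)) (hφ : DifferentiableAt ℝ φ x) (hL : ‖fderiv ℝ φ x‖ ≤ L) :
    ‖fderiv ℝ (f ∘ φ) x‖ ^ 2 ≤ L ^ 2 * ‖fderiv ℝ f (φ x)‖ ^ 2 := by
  rw [fderiv_comp x hf hφ, ← mul_pow, mul_comm L]
  gcongr
  exact (ContinuousLinearMap.opNorm_comp_le _ _).trans (by gcongr)

theorem measurable_norm_fderiv_sq [MeasurableSpace E] [OpensMeasurableSpace E] [CompleteSpace G]
    (f : E → G) : Measurable fun x => ‖fderiv ℝ f x‖ ^ 2 := by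
  borelize (E →L[ℝ] G)
  exact (measurable_fderiv ℝ f).norm.pow_const 2

end FDeriv

section Poincare

variable {E F : Type*} [NormedAddCommGroup E] [NormedSpace ℝ E] [MeasurableSpace E]
  [NormedAddCommGroup F] [NormedSpace ℝ F] [MeasurableSpace F]
  {μ ν : Measure E} {s : Set E} {C : ℝ}

/-- The Poincaré inequality `‖f - μ[f]‖_{L²(μ)} ≤ C ‖∇f‖_{L²(μ)}`, squared, for functions
differentiable on `s`; intended for probability measures `μ` carried by `s`. The operator norm of
`fderiv ℝ f x` stands for `|∇f x|`. Since `Var[f; μ] = 0` by convention for `f ∉ L²(μ)`, only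
`f ∈ L²(μ)` are considered. -/
def PoincareInequalityOn (s : Set E) (μ : Measure E) (C : ℝ) : Prop :=
  ∀ f : E → ℝ, DifferentiableOn ℝ f s → MemLp f 2 μ →
    Integrable (fun x => ‖fderiv ℝ f x‖ ^ 2) μ → Var[f; μ] ≤ C ^ 2 * ∫ x, ‖fderiv ℝ f x‖ ^ 2 ∂μ

theorem PoincareInequalityOn.variance_le [IsFiniteMeasure μ] (hP : PoincareInequalityOn s μ C)
    {f : E → ℝ} (hf : DifferentiableOn ℝ f s) (hfm : AEStronglyMeasurable f μ)
    (hf' : Integrable (fun x => ‖fderiv ℝ f x‖ ^ 2) μ) :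
    Var[f; μ] ≤ C ^ 2 * ∫ x, ‖fderiv ℝ f x‖ ^ 2 ∂μ := by
  by_cases hfL2 : MemLp f 2 μ
  · exact hP f hf hfL2 hf'
  · rw [variance_of_not_memLp hfm hfL2]
    positivity

theorem PoincareInequalityOn.of_le_smul [IsFiniteMeasure μ] [IsProbabilityMeasure ν]
    (hP : PoincareInequalityOn s μ C) {A B : ℝ≥0} (hμν : μ ≤ A • ν) (hνμ : ν ≤ B • μ) :
    PoincareInequalityOn s ν (√(A * B) * C) := by
  intro f hf hfν hf'ν
  have hfμ : MemLp f 2 μ := hfν.of_measure_le_smul ENNReal.coe_ne_top hμν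
  have hf'μ : Integrable (fun x => ‖fderiv ℝ f x‖ ^ 2) μ :=
    hf'ν.of_measure_le_smul ENNReal.coe_ne_top hμν
  calc Var[f; ν] ≤ ∫ x, (f x - μ[f]) ^ 2 ∂ν :=
        variance_le_integral_sub_sq hfν.aestronglyMeasurable _
    _ ≤ B * ∫ x, (f x - μ[f]) ^ 2 ∂μ :=
        integral_le_mul_integral_of_le_smul hνμ (fun x => sq_nonneg _)
          (hfμ.sub (memLp_const _)).integrable_sq
    _ = B * Var[f; μ] := by rw [variance_eq_integral hfμ.aestronglyMeasurable.aemeasurable]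
    _ ≤ B * (C ^ 2 * ∫ x, ‖fderiv ℝ f x‖ ^ 2 ∂μ) := by gcongr; exact hP f hf hfμ hf'μ
    _ ≤ B * (C ^ 2 * (A * ∫ x, ‖fderiv ℝ f x‖ ^ 2 ∂ν)) := by
        gcongr
        exact integral_le_mul_integral_of_le_smul hμν (fun x => sq_nonneg _) hf'ν
    _ = (√(A * B) * C) ^ 2 * ∫ x, ‖fderiv ℝ f x‖ ^ 2 ∂ν := by
        rw [mul_pow, Real.sq_sqrt (by positivity)]
        ring

theorem PoincareInequalityOn.tilted [IsProbabilityMeasure μ] (hP : PoincareInequalityOn s μ C)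
    {W : E → ℝ} (hWm : AEMeasurable W μ) {a b : ℝ} (hW : ∀ᵐ x ∂μ, W x ∈ Set.Icc a b) :
    PoincareInequalityOn s (μ.tilted W) (Real.exp ((b - a) / 2) * C) := by
  have hexp : Integrable (fun x => Real.exp (W x)) μ := by
    simpa only [one_mul] using integrable_exp_mul_of_mem_Icc (t := 1) hWm hW
  have := isProbabilityMeasure_tilted hexp
  have hZ : 0 < ∫ x, Real.exp (W x) ∂μ := integral_exp_pos hexp
  have hAB : Real.exp (b - a) = Real.exp (-a) * (∫ x, Real.exp (W x) ∂μ) *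
      (Real.exp b / ∫ x, Real.exp (W x) ∂μ) := by
    rw [sub_eq_neg_add, Real.exp_add]
    field_simp
  convert hP.of_le_smul (le_smul_tilted hexp (hW.mono fun x hx => hx.1))
    (tilted_le_smul (hW.mono fun x hx => hx.2)) using 2
  rw [Real.coe_toNNReal _ (by positivity), Real.coe_toNNReal _ (by positivity), Real.exp_half, hAB]

theorem PoincareInequalityOn.map [OpensMeasurableSpace E] [OpensMeasurableSpace F]
    (hP : PoincareInequalityOn s μ C) (hs : IsOpen s) (hμs : ∀ᵐ x ∂μ, x ∈ s)
    {φ : E → F} {t : Set F} {L : ℝ} (ht : IsOpen t) (hst : Set.MapsTo φ s t)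
    (hφm : AEMeasurable φ μ) (hφ : DifferentiableOn ℝ φ s) (hL : ∀ x ∈ s, ‖fderiv ℝ φ x‖ ≤ L) :
    PoincareInequalityOn t (μ.map φ) (L * C) := by
  intro f hf hfL2 hf'
  have hf'm := (measurable_norm_fderiv_sq f).aestronglyMeasurable (μ := μ.map φ)
  have hfφL2 : MemLp (f ∘ φ) 2 μ := (memLp_map_measure_iff hfL2.1 hφm).1 hfL2
  have hint : Integrable (fun x => L ^ 2 * ‖fderiv ℝ f (φ x)‖ ^ 2) μ :=
    ((integrable_map_measure hf'm hφm).1 hf').const_mul _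
  have hle : ∀ᵐ x ∂μ, ‖fderiv ℝ (f ∘ φ) x‖ ^ 2 ≤ L ^ 2 * ‖fderiv ℝ f (φ x)‖ ^ 2 :=
    hμs.mono fun x hx => norm_fderiv_comp_sq_le (hf.differentiableAt (ht.mem_nhds (hst hx)))
      (hφ.differentiableAt (hs.mem_nhds hx)) (hL x hx)
  have hfφ' : Integrable (fun x => ‖fderiv ℝ (f ∘ φ) x‖ ^ 2) μ :=
    hint.mono' (measurable_norm_fderiv_sq _).aestronglyMeasurable
      (hle.mono fun x hx => by rwa [Real.norm_of_nonneg (sq_nonneg _)])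
  calc Var[f; μ.map φ] = Var[f ∘ φ; μ] := variance_map hfL2.1.aemeasurable hφm
    _ ≤ C ^ 2 * ∫ x, ‖fderiv ℝ (f ∘ φ) x‖ ^ 2 ∂μ := hP _ (hf.comp hφ hst) hfφL2 hfφ'
    _ ≤ C ^ 2 * ∫ x, L ^ 2 * ‖fderiv ℝ f (φ x)‖ ^ 2 ∂μ := by
        gcongr ?_ * ?_
        exact integral_mono_ae hfφ' hint hle
    _ = (L * C) ^ 2 * ∫ y, ‖fderiv ℝ f y‖ ^ 2 ∂μ.map φ := by
        rw [integral_const_mul, integral_map hφm hf'm]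
        ring

end Poincare

section Homothety

variable {E : Type*} [NormedAddCommGroup E] [NormedSpace ℝ E] (x₀ : E) {h : ℝ}

theorem hasFDerivAt_homothety (h : ℝ) (x : E) :
    HasFDerivAt (AffineMap.homothety x₀ h) (h • ContinuousLinearMap.id ℝ E) x :=
  (((hasFDerivAt_id x).sub_const x₀).const_smul h).add_const x₀

theorem norm_fderiv_homothety_le (h : ℝ) (x : E) :
    ‖fderiv ℝ (AffineMap.homothety x₀ h) x‖ ≤ |h| := by
  rw [(hasFDerivAt_homothety x₀ h x).fderiv, norm_smul, Real.norm_eq_abs]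
  exact mul_le_of_le_one_right (abs_nonneg h) ContinuousLinearMap.norm_id_le

variable [MeasurableSpace E] [BorelSpace E] [FiniteDimensional ℝ E] {μ : Measure E}
  [μ.IsAddHaarMeasure] {U : Set E} {C : ℝ}

theorem map_homothety_cond (hh : h ≠ 0) (hU : MeasurableSet U) :
    μ[|U].map (AffineMap.homothety x₀ h) = μ[|AffineMap.homothety x₀ h '' U] := by
  have hc₀ : ENNReal.ofReal |h ^ Module.finrank ℝ E| ≠ 0 := by
    simpa only [ne_eq, ENNReal.ofReal_eq_zero, not_le, abs_pos] using pow_ne_zero _ hh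
  ext t ht
  rw [Measure.map_apply (AffineMap.homothety_continuous x₀ h).measurable ht,
    cond_apply hU, cond_apply' ht, ← Set.image_inter_preimage,
    Measure.addHaar_image_homothety, Measure.addHaar_image_homothety,
    ENNReal.mul_inv (.inl hc₀) (.inl ENNReal.ofReal_ne_top), mul_mul_mul_comm,
    ENNReal.inv_mul_cancel hc₀ ENNReal.ofReal_ne_top, one_mul]

theorem PoincareInequalityOn.homothety (hP : PoincareInequalityOn U μ[|U] C) (hU : IsOpen U)
    (hh : h ≠ 0) :
    PoincareInequalityOn (AffineMap.homothety x₀ h '' U) μ[|AffineMap.homothety x₀ h '' U]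
      (|h| * C) := by
  rw [← map_homothety_cond x₀ hh hU.measurableSet]
  exact hP.map hU (ae_cond_mem hU.measurableSet) (AffineMap.homothety_isOpenMap x₀ h hh U hU)
    (Set.mapsTo_image _ U) (AffineMap.homothety_continuous x₀ h).aemeasurable
    (fun x _ => (hasFDerivAt_homothety x₀ h x).differentiableAt.differentiableWithinAt)
    (fun x _ => norm_fderiv_homothety_le x₀ h x)

theorem poincare_gibbs_general (hP : PoincareInequalityOn U μ[|U] C) (hU : IsOpen U)
    (hUne : U.Nonempty) (hUfin : μ U ≠ ∞) (hh : h ≠ 0) {V : E → ℝ}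
    (hVm : AEMeasurable V (μ.restrict (AffineMap.homothety x₀ h '' U))) {a b : ℝ}
    (hV : ∀ x ∈ AffineMap.homothety x₀ h '' U, V x ∈ Set.Icc a b) {β : ℝ} (hβ : 0 ≤ β) :
    PoincareInequalityOn (AffineMap.homothety x₀ h '' U)
      ((μ.restrict (AffineMap.homothety x₀ h '' U)).tilted fun x => -β * V x)
      (|h| * C * Real.exp (β / 2 * (b - a))) := by
  set Uh := AffineMap.homothety x₀ h '' U with hUh
  have hUh_open : IsOpen Uh := AffineMap.homothety_isOpenMap x₀ h hh U hU
  have hUh₀ : μ Uh ≠ 0 := (hUh_open.measure_pos μ (hUne.image _)).ne'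
  have hUhfin : μ Uh ≠ ∞ := by
    rw [hUh, Measure.addHaar_image_homothety]
    exact ENNReal.mul_ne_top ENNReal.ofReal_ne_top hUfin
  have := cond_isProbabilityMeasure_of_finite hUh₀ hUhfin
  have hW : ∀ᵐ x ∂μ[|Uh], -β * V x ∈ Set.Icc (-β * b) (-β * a) := by
    filter_upwards [ae_cond_mem hUh_open.measurableSet] with x hx
    exact ⟨mul_le_mul_of_nonpos_left (hV x hx).2 (neg_nonpos.2 hβ),
      mul_le_mul_of_nonpos_left (hV x hx).1 (neg_nonpos.2 hβ)⟩
  have hWm : AEMeasurable (fun x => -β * V x) μ[|Uh] := (hVm.smul_measure _).const_mul _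
  rw [← tilted_smul_measure (ENNReal.inv_ne_zero.2 hUhfin) (ENNReal.inv_ne_top.2 hUh₀)]
  have hexp : Real.exp (β / 2 * (b - a)) = Real.exp ((-β * a - -β * b) / 2) := by ring_nf
  rw [mul_comm, hexp]
  exact (hP.homothety x₀ hU hh).tilted hWm hW

end Homothety

section Bounded

variable {X : Type*} [PseudoMetricSpace X] [ProperSpace X] {s : Set X}

theorem isBounded_image_of_continuous {Y : Type*} [PseudoMetricSpace Y] {g : X → Y}
    (hg : Continuous g) (hs : Bornology.IsBounded s) : Bornology.IsBounded (g '' s) :=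
  (hs.isCompact_closure.image hg).isBounded.subset (Set.image_mono subset_closure)

theorem mem_Icc_sInf_sSup_image {V : X → ℝ} (hV : Continuous V) (hs : Bornology.IsBounded s)
    {x : X} (hx : x ∈ s) : V x ∈ Set.Icc (sInf (V '' s)) (sSup (V '' s)) :=
  have hVs := isBounded_image_of_continuous hV hs
  have hVx := Set.mem_image_of_mem V hx
  ⟨csInf_le hVs.bddBelow hVx, le_csSup hVs.bddAbove hVx⟩

theorem integrableOn_of_continuous_of_isBounded [MeasurableSpace X] [OpensMeasurableSpace X]
    {μ : Measure X} [IsFiniteMeasureOnCompacts μ] {G : Type*} [NormedAddCommGroup G] {g : X → G}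
    (hg : Continuous g) (hs : Bornology.IsBounded s) : IntegrableOn g s μ :=
  have hint : IntegrableOn g (closure s) μ :=
    hg.continuousOn.integrableOn_compact' hs.isCompact_closure isClosed_closure.measurableSet
  hint.mono_set subset_closure

end Bounded

section Euclidean

variable {d : ℕ} {U : Set (EuclideanSpace ℝ (Fin d))} {V f : EuclideanSpace ℝ (Fin d) → ℝ}
  {β Λ K : ℝ}

theorem SatisfiesPoincare.poincareInequalityOn (hP : SatisfiesPoincare U Λ) (hU₀ : volume U ≠ 0)
    (hUfin : volume U ≠ ∞) : PoincareInequalityOn U volume[|U] Λ := by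
  intro f hf hfL2 hf'
  have hf'U : IntegrableOn (fun x => ‖fderiv ℝ f x‖ ^ 2) U :=
    (integrable_smul_measure (ENNReal.inv_ne_zero.2 hUfin) (ENNReal.inv_ne_top.2 hU₀)).1 hf'
  have hint (g : EuclideanSpace ℝ (Fin d) → ℝ) :
      ∫ x, g x ∂volume[|U] = (volume U).toReal⁻¹ * ∫ x in U, g x := by
    rw [ProbabilityTheory.cond, integral_smul_measure, ENNReal.toReal_inv, smul_eq_mul]
  have hsq := pow_le_pow_left₀ (Real.sqrt_nonneg _) (hP f hf hf'U) 2
  rw [mul_pow, Real.sq_sqrt (by positivity), Real.sq_sqrt (by positivity)] at hsq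
  rw [variance_eq_integral hfL2.1.aemeasurable, hint, hint, hint, mul_left_comm]
  exact mul_le_mul_of_nonneg_left hsq (by positivity)

theorem gibbsMean_eq_integral_tilted (U : Set (EuclideanSpace ℝ (Fin d)))
    (V : EuclideanSpace ℝ (Fin d) → ℝ) (β : ℝ) (f : EuclideanSpace ℝ (Fin d) → ℝ) :
    gibbsMean U V β f = ∫ x, f x ∂(volume.restrict U).tilted fun x => -β * V x :=
  (integral_tilted_eq_inv_mul _ f).symm

theorem PoincareInequalityOn.sqrt_gibbs_le
    (hP : PoincareInequalityOn U ((volume.restrict U).tilted fun x => -β * V x) K) (hK : 0 ≤ K)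
    (hU : IsOpen U) (hV : IntegrableOn (fun x => Real.exp (-β * V x)) U)
    (hf : DifferentiableOn ℝ f U)
    (hf' : IntegrableOn (fun x => ‖fderiv ℝ f x‖ ^ 2 * Real.exp (-β * V x)) U) :
    √((gibbsZ U V β)⁻¹ * ∫ x in U, (f x - gibbsMean U V β f) ^ 2 * Real.exp (-β * V x)) ≤
      K * √((gibbsZ U V β)⁻¹ * ∫ x in U, ‖fderiv ℝ f x‖ ^ 2 * Real.exp (-β * V x)) := by
  have hfm : AEStronglyMeasurable f ((volume.restrict U).tilted fun x => -β * V x) :=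
    (hf.continuousOn.aestronglyMeasurable hU.measurableSet).mono_ac
      (tilted_absolutelyContinuous _ _)
  have hf'π : Integrable (fun x => ‖fderiv ℝ f x‖ ^ 2)
      ((volume.restrict U).tilted fun x => -β * V x) := by
    rw [integrable_tilted_iff hV]
    simp_rw [smul_eq_mul, mul_comm (Real.exp _)]
    exact hf'
  rw [gibbsMean_eq_integral_tilted, gibbsZ, ← integral_tilted_eq_inv_mul,
    ← integral_tilted_eq_inv_mul, ← variance_eq_integral hfm.aemeasurable]
  refine Real.sqrt_le_iff.2 ⟨by positivity, ?_⟩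
  rw [mul_pow, Real.sq_sqrt (by positivity)]
  exact hP.variance_le hf hfm hf'π

end Euclidean

/-- if `U` satisfies the Poincaré inequality with constant `Λ`, then the Gibbs
measure `π_h ∝ e^{−βV}` on the dilated set `U_h = x₀ + h(U − x₀)` satisfies
`‖f − π_h[f]‖_{L²(π_h)} ≤ h Λ exp((β/2)(sup_{U_h} V − inf_{U_h} V)) ‖∇f‖_{L²(π_h)}`
for every differentiable `f` with `∇f ∈ L²(π_h)`. -/
theorem poincare_gibbs {d : ℕ} (U : Set (EuclideanSpace ℝ (Fin d)))
    (x₀ : EuclideanSpace ℝ (Fin d))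
    (hUopen : IsOpen U) (hUbdd : Bornology.IsBounded U) (hUpos : 0 < volume U)
    (Λ : ℝ) (hΛ : 0 < Λ) (hP : SatisfiesPoincare U Λ)
    (h : ℝ) (hh : 0 < h)
    (V : EuclideanSpace ℝ (Fin d) → ℝ) (hV : Continuous V) (β : ℝ) (hβ : 0 < β) :
    ∀ f : EuclideanSpace ℝ (Fin d) → ℝ,
      DifferentiableOn ℝ f ((fun x => x₀ + h • (x - x₀)) '' U) →
      IntegrableOn (fun x => ‖fderiv ℝ f x‖ ^ 2 * Real.exp (-β * V x))
        ((fun x => x₀ + h • (x - x₀)) '' U) volume →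
      Real.sqrt ((gibbsZ ((fun x => x₀ + h • (x - x₀)) '' U) V β)⁻¹ *
          ∫ x in (fun x => x₀ + h • (x - x₀)) '' U,
            (f x - gibbsMean ((fun x => x₀ + h • (x - x₀)) '' U) V β f) ^ 2 *
              Real.exp (-β * V x)) ≤
        h * Λ *
          Real.exp ((β / 2) *
            (sSup (V '' ((fun x => x₀ + h • (x - x₀)) '' U)) -
              sInf (V '' ((fun x => x₀ + h • (x - x₀)) '' U)))) *
          Real.sqrt ((gibbsZ ((fun x => x₀ + h • (x - x₀)) '' U) V β)⁻¹ *
            ∫ x in (fun x => x₀ + h • (x - x₀)) '' U,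
              ‖fderiv ℝ f x‖ ^ 2 * Real.exp (-β * V x)) := by
  intro f hf hf'
  have hT : (fun x => x₀ + h • (x - x₀)) = AffineMap.homothety x₀ h := by
    ext1 x
    exact add_comm _ _
  rw [hT] at hf hf' ⊢
  have hUfin : volume U ≠ ∞ := hUbdd.measure_lt_top.ne
  have hUh_bdd := isBounded_image_of_continuous (AffineMap.homothety_continuous x₀ h) hUbdd
  have hgibbs := poincare_gibbs_general x₀ (hP.poincareInequalityOn hUpos.ne' hUfin) hUopen
    (nonempty_of_measure_ne_zero hUpos.ne') hUfin hh.ne' hV.aemeasurable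
    (fun _ => mem_Icc_sInf_sSup_image hV hUh_bdd) hβ.le
  have hexp : Continuous fun x => Real.exp (-β * V x) := by fun_prop
  rw [abs_of_pos hh] at hgibbs
  exact hgibbs.sqrt_gibbs_le (by positivity) (AffineMap.homothety_isOpenMap x₀ h hh.ne' U hUopen)
    (integrableOn_of_continuous_of_isBounded hexp hUh_bdd) hf hf'
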